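/- Main realization theorem (existence form): Let r̲ : Fin n₁ → ℕ and c̲ : Fin n₂ → ℕ be non-increasing integer vectors and r̄ : Fin n₁ → ℕ, c̄ : Fin n₂ → ℕ integer vectors with r̲ ≤ r̄ and c̲ ≤ c̄ componentwise. If S_k(r̲) ≤ S_k(c̄') for all k = 1, …, n₁ and S_k(c̲) ≤ S_k(r̄') for all k = 1, …, n₂ (where c̄' is the conjugate of c̄ of length n₁ and r̄' is the conjugate of r̄ of length n₂), then there exists a bi-graphical pair of integer vectors (r, c) with r̲ ≤ r ≤ r̄ and c̲ ≤ c ≤ c̄ componentwise. -/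

import Mathlib

open Finset

/-- Degree of row vertex `i` in a bipartite graph given by biadjacency matrix `M`. -/
def degU {n₁ n₂ : ℕ} (M : Fin n₁ → Fin n₂ → Bool) (i : Fin n₁) : ℕ :=
  (univ.filter fun j => M i j = true).card

/-- Degree of column vertex `j` in a bipartite graph given by biadjacency matrix `M`. -/
def degV {n₁ n₂ : ℕ} (M : Fin n₁ → Fin n₂ → Bool) (j : Fin n₂) : ℕ :=
  (univ.filter fun i => M i j = true).card

/-- `psum x k` = sum of the first `k` components of the vector `x`. -/
def psum {n : ℕ} (x : Fin n → ℕ) (k : ℕ) : ℕ :=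
  ∑ i ∈ univ.filter (fun i : Fin n => (i : ℕ) < k), x i

/-- `conj x i` = the `i`-th component (1-based) of the conjugate vector of `x`:
the number of indices `j` with `x j ≥ i`. -/
def conj {m : ℕ} (x : Fin m → ℕ) (i : ℕ) : ℕ :=
  (univ.filter fun j : Fin m => i ≤ x j).card

/-- The conjugate vector of `x`, taken with length `n`. -/
def conjVec (n : ℕ) {m : ℕ} (x : Fin m → ℕ) : Fin n → ℕ :=
  fun i => conj x ((i : ℕ) + 1)

/-- A pair `(r, c)` is bi-graphical if some biadjacency matrix realizes these
degrees exactly. -/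
def BiGraphical {n₁ n₂ : ℕ} (r : Fin n₁ → ℕ) (c : Fin n₂ → ℕ) : Prop :=
  ∃ M : Fin n₁ → Fin n₂ → Bool, (∀ i, degU M i = r i) ∧ (∀ j, degV M j = c j)

/-- `M` is a realization of the four-tuple `(rl, ru, cl, cu)`. -/
def IsRealization {n₁ n₂ : ℕ} (rl ru : Fin n₁ → ℕ) (cl cu : Fin n₂ → ℕ)
    (M : Fin n₁ → Fin n₂ → Bool) : Prop :=
  (∀ i, rl i ≤ degU M i ∧ degU M i ≤ ru i) ∧ (∀ j, cl j ≤ degV M j ∧ degV M j ≤ cu j)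

/-- The four-tuple `(rl, ru, cl, cu)` is realizable. -/
def Realizable {n₁ n₂ : ℕ} (rl ru : Fin n₁ → ℕ) (cl cu : Fin n₂ → ℕ) : Prop :=
  ∃ M, IsRealization rl ru cl cu M

/-- The number of edges of the bipartite graph given by `M`. -/
def edges {n₁ n₂ : ℕ} (M : Fin n₁ → Fin n₂ → Bool) : ℕ :=
  (univ.filter fun p : Fin n₁ × Fin n₂ => M p.1 p.2 = true).card

/-- `max (0, δ₁)` where `δ₁ = max over 1 ≤ j ≤ n₁ of (S_j(rl) - S_j(cl'))`
computed in the integers, `cl'` being the conjugate of `cl` of length `n₁`. -/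
def delta1 {n₁ n₂ : ℕ} (rl : Fin n₁ → ℕ) (cl : Fin n₂ → ℕ) : ℕ :=
  (Finset.Icc 1 n₁).sup fun j =>
    ((psum rl j : ℤ) - (psum (conjVec n₁ cl) j : ℤ)).toNat

def setc {n m : ℕ} (M : Fin n → Fin m → Bool) (x : Fin n) (y : Fin m) (v : Bool) :
    Fin n → Fin m → Bool := fun a b => if a = x ∧ b = y then v else M a b

theorem degU_setc_true {n m : ℕ} (M : Fin n → Fin m → Bool) (x : Fin n) (y : Fin m)
    (h : M x y = false) (a : Fin n) :
    degU (setc M x y true) a = degU M a + if a = x then 1 else 0 := by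
  unfold degU setc
  by_cases hax : a = x
  · subst hax
    have : (univ.filter fun b => (if a = a ∧ b = y then true else M a b) = true)
        = insert y (univ.filter fun b => M a b = true) := by
      ext b
      by_cases hb : b = y <;> simp [hb]
    rw [this, card_insert_of_notMem (by simp [h])]
    simp
  · simp [hax]

theorem degV_setc_true {n m : ℕ} (M : Fin n → Fin m → Bool) (x : Fin n) (y : Fin m)
    (h : M x y = false) (b : Fin m) :
    degV (setc M x y true) b = degV M b + if b = y then 1 else 0 := by
  have := degU_setc_true (fun b a => M a b) y x h b
  unfold degU setc at this
  unfold degV setc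
  rw [← this]
  simp only [and_comm]

theorem setc_setc {n m : ℕ} (M : Fin n → Fin m → Bool) (x : Fin n) (y : Fin m)
    (h : M x y = true) : setc (setc M x y false) x y true = M := by
  funext a b
  unfold setc
  by_cases hab : a = x ∧ b = y
  · simp [hab, h]
  · simp [hab]

theorem degU_setc_false {n m : ℕ} (M : Fin n → Fin m → Bool) (x : Fin n) (y : Fin m)
    (h : M x y = true) (a : Fin n) :
    degU (setc M x y false) a + (if a = x then 1 else 0) = degU M a := by
  have := degU_setc_true (setc M x y false) x y (by simp [setc]) a
  rw [setc_setc M x y h] at this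
  exact this.symm

theorem degV_setc_false {n m : ℕ} (M : Fin n → Fin m → Bool) (x : Fin n) (y : Fin m)
    (h : M x y = true) (b : Fin m) :
    degV (setc M x y false) b + (if b = y then 1 else 0) = degV M b := by
  have := degV_setc_true (setc M x y false) x y (by simp [setc]) b
  rw [setc_setc M x y h] at this
  exact this.symm

/-- Alternating simple path between rows, later rows lying in `S`. -/
inductive APath {n m : ℕ} (M : Fin n → Fin m → Bool) :
    Finset (Fin n) → Fin n → Fin n → Prop
  | nil (S : Finset (Fin n)) (x : Fin n) : APath M S x x
  | cons (S : Finset (Fin n)) (x z y : Fin n) (j : Fin m) (hz : z ∈ S)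
      (h0 : M x j = false) (h1 : M z j = true) (hp : APath M (S.erase z) z y) : APath M S x y

theorem APath.extend {n m : ℕ} {M : Fin n → Fin m → Bool} {S : Finset (Fin n)} {x y : Fin n}
    (hp : APath M S x y) (w : Fin n) (j : Fin m) (h0 : M y j = false) (h1 : M w j = true)
    (hw : w = x ∨ w ∈ S) : APath M S x w := by
  induction hp with
  | nil S x =>
    rcases hw with rfl | hw
    · exact APath.nil _ _
    · exact APath.cons S x w w j hw h0 h1 (APath.nil _ _)
  | cons S x z y k hz k0 k1 hp ih =>
    rcases hw with rfl | hw
    · exact APath.nil _ _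
    · refine APath.cons S x z w k hz k0 k1 (ih h0 ?_)
      by_cases hwz : w = z
      · exact Or.inl hwz
      · exact Or.inr (mem_erase.2 ⟨hwz, hw⟩)

theorem APath.congr {n m : ℕ} {M M' : Fin n → Fin m → Bool} {S : Finset (Fin n)} {x y : Fin n}
    (hp : APath M S x y) (hx : ∀ j, M x j = false → M' x j = false)
    (hS : ∀ z ∈ S, M' z = M z) : APath M' S x y := by
  induction hp with
  | nil S x => exact APath.nil _ _
  | cons S x z y k hz k0 k1 hp ih =>
    refine APath.cons S x z y k hz (hx _ k0) (by rw [hS z hz]; exact k1) (ih ?_ ?_)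
    · intro j hj
      rw [hS z hz]; exact hj
    · intro w hw
      exact hS w (mem_of_mem_erase hw)

theorem APath.mem {n m : ℕ} {M : Fin n → Fin m → Bool} {S : Finset (Fin n)} {x y : Fin n}
    (hp : APath M S x y) : y = x ∨ y ∈ S := by
  induction hp with
  | nil S x => exact Or.inl rfl
  | cons S x z y k hz k0 k1 hp ih =>
    rcases ih with rfl | h
    · exact Or.inr hz
    · exact Or.inr (mem_of_mem_erase h)

theorem APath.flip_aux {n m : ℕ} (N : ℕ) : ∀ (M : Fin n → Fin m → Bool) (S : Finset (Fin n))
    (x y : Fin n), S.card = N → APath M S x y → x ∉ S →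
    ∃ M' : Fin n → Fin m → Bool, (∀ b, degV M' b = degV M b) ∧
      (∀ a, degU M' a + (if a = y then 1 else 0) = degU M a + (if a = x then 1 else 0)) ∧
      (∀ j, M y j = false → M' y j = false) := by
  induction N with
  | zero =>
    intro M S x y hS hp hx
    cases hp with
    | nil => exact ⟨M, fun _ => rfl, fun _ => rfl, fun _ h => h⟩
    | cons _ _ z _ k hz k0 k1 hp => simp_all
  | succ N ih =>
    intro M S x y hS hp hx
    cases hp with
    | nil => exact ⟨M, fun _ => rfl, fun _ => rfl, fun _ h => h⟩
    | cons _ _ z _ k hz k0 k1 hp =>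
      have hzx : z ≠ x := fun h => hx (h ▸ hz)
      set M1 := setc M x k true with hM1
      have k1' : M1 z k = true := by simp [hM1, setc, k1]
      set M2 := setc M1 z k false with hM2
      have hrow : ∀ w, w ≠ x → w ≠ z → M2 w = M w := by
        intro w hwx hwz
        funext b
        simp [hM2, hM1, setc, hwx, hwz]
      have hzrow : ∀ j, M z j = false → M2 z j = false := by
        intro j hj
        simp [hM2, hM1, setc, hzx, hj]
      have hp2 : APath M2 (S.erase z) z y := by
        refine hp.congr hzrow ?_
        intro w hw
        rw [mem_erase] at hw
        exact hrow w (fun h => hx (h ▸ hw.2)) hw.1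
      obtain ⟨M', hV, hU, hy⟩ := ih M2 (S.erase z) z y
        (by rw [card_erase_of_mem hz, hS]; rfl) hp2 (by simp)
      refine ⟨M', ?_, ?_, ?_⟩
      · intro b
        have e1 := degV_setc_true M x k k0 b
        have e2 := degV_setc_false M1 z k k1' b
        rw [hV b]
        rw [← hM1] at e1
        rw [← hM2] at e2
        omega
      · intro a
        have e1 := degU_setc_true M x k k0 a
        have e2 := degU_setc_false M1 z k k1' a
        have e3 := hU a
        rw [← hM1] at e1
        rw [← hM2] at e2
        omega
      · intro j hj
        apply hy
        rcases hp.mem with rfl | h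
        · exact hzrow j hj
        · rw [mem_erase] at h
          rw [hrow y (fun e => hx (e ▸ h.2)) h.1]
          exact hj

def defi {n m : ℕ} (rl : Fin n → ℕ) (cl : Fin m → ℕ) (M : Fin n → Fin m → Bool) : ℕ :=
  ∑ i, (rl i - degU M i) + ∑ j, (cl j - degV M j)

theorem improve {n m : ℕ} (rl ru : Fin n → ℕ) (cl cu : Fin m → ℕ) (hr : rl ≤ ru)
    (hcut : ∀ (A : Finset (Fin n)) (B : Finset (Fin m)),
      ∑ i ∈ A, rl i ≤ ∑ j ∈ B, cu j + A.card * Bᶜ.card)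
    (M : Fin n → Fin m → Bool) (hU : ∀ i, degU M i ≤ ru i) (hV : ∀ j, degV M j ≤ cu j)
    (x : Fin n) (hx : degU M x < rl x) :
    ∃ M' : Fin n → Fin m → Bool, (∀ i, degU M' i ≤ ru i) ∧ (∀ j, degV M' j ≤ cu j) ∧
      defi rl cl M' < defi rl cl M := by
  classical
  set A : Finset (Fin n) := univ.filter fun y => APath M (univ.erase x) x y with hA
  set B : Finset (Fin m) := univ.filter fun j => ∃ i ∈ A, M i j = false with hB
  have hxA : x ∈ A := by
    rw [hA, mem_filter]; exact ⟨mem_univ _, APath.nil _ _⟩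
  have hclosed : ∀ j ∈ B, ∀ i, M i j = true → i ∈ A := by
    intro j hj i hij
    rw [hB, mem_filter] at hj
    obtain ⟨-, y, hy, hyj⟩ := hj
    rw [hA, mem_filter] at hy ⊢
    refine ⟨mem_univ _, hy.2.extend i j hyj hij ?_⟩
    by_cases h : i = x
    · exact Or.inl h
    · exact Or.inr (by simp [h])
  by_cases hc1 : ∃ y ∈ A, rl y < degU M y
  · obtain ⟨y, hy, hyd⟩ := hc1
    rw [hA, mem_filter] at hy
    obtain ⟨M', h1, h2, -⟩ := APath.flip_aux _ M _ x y rfl hy.2 (by simp)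
    refine ⟨M', ?_, ?_, ?_⟩
    · intro i
      have := h2 i
      have := hU i
      have h3 := hr x
      by_cases hix : i = x
      · subst hix
        simp at *
        omega
      · simp [hix] at *
        omega
    · intro j; rw [h1]; exact hV j
    · unfold defi
      simp only [h1]
      apply Nat.add_lt_add_right
      apply sum_lt_sum
      · intro i _
        have := h2 i
        by_cases hiy : i = y
        · subst hiy
          simp only [if_true] at this
          omega
        · simp only [hiy, if_false] at this
          omega
      · refine ⟨x, mem_univ _, ?_⟩
        have := h2 x
        have hxy : x ≠ y := by rintro rfl; omega
        simp only [hxy, if_false, if_true] at this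
        omega
  by_cases hc2 : ∃ j ∈ B, degV M j < cu j
  · obtain ⟨j, hj, hjd⟩ := hc2
    rw [hB, mem_filter] at hj
    obtain ⟨-, y, hy, hyj⟩ := hj
    rw [hA, mem_filter] at hy
    obtain ⟨M', h1, h2, h3⟩ := APath.flip_aux _ M _ x y rfl hy.2 (by simp)
    have g1 := degU_setc_true M' y j (h3 j hyj)
    have g2 := degV_setc_true M' y j (h3 j hyj)
    have g3 : ∀ i, degU (setc M' y j true) i = degU M i + if i = x then 1 else 0 := by
      intro i
      rw [g1, h2]
    simp only [h1] at g2
    refine ⟨setc M' y j true, ?_, ?_, ?_⟩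
    · intro i
      rw [g3]
      have := hU i
      have h4 : rl x ≤ ru x := hr x
      by_cases hix : i = x
      · rw [if_pos hix, hix]
        omega
      · simp only [hix, if_false]
        omega
    · intro b
      rw [g2]
      have := hV b
      by_cases hb : b = j
      · subst hb
        simp only [if_true]
        omega
      · simp only [hb, if_false]
        omega
    · unfold defi
      simp only [g2, g3]
      apply add_lt_add_of_lt_of_le
      · apply sum_lt_sum
        · intro i _; omega
        · refine ⟨x, mem_univ _, ?_⟩
          simp only [if_true]
          omega
      · apply sum_le_sum
        intro b _; omega
  exfalso
  push Not at hc1 hc2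
  have hlt : ∑ i ∈ A, degU M i < ∑ i ∈ A, rl i :=
    sum_lt_sum hc1 ⟨x, hxA, hx⟩
  have hle := hcut A B
  have hUs : ∀ i, degU M i = ∑ j, if M i j = true then 1 else 0 := by
    intro i; unfold degU; rw [card_filter]
  have hVs : ∀ j, degV M j = ∑ i, if M i j = true then 1 else 0 := by
    intro i; unfold degV; rw [card_filter]
  have e1 : ∑ i ∈ A, degU M i = ∑ j ∈ B, degV M j + A.card * Bᶜ.card := by
    simp only [hUs, hVs]
    rw [sum_comm, ← sum_add_sum_compl B]
    congr 1
    · apply sum_congr rfl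
      intro j hj
      apply sum_subset (subset_univ _)
      intro i _ hi
      rw [if_neg]
      exact fun h => hi (hclosed j hj i h)
    · rw [mul_comm, ← smul_eq_mul, ← sum_const]
      apply sum_congr rfl
      intro j hj
      rw [card_eq_sum_ones]
      apply sum_congr rfl
      intro i hi
      rw [if_pos]
      by_contra h
      rw [mem_compl, hB, mem_filter] at hj
      exact hj ⟨mem_univ _, i, hi, by simpa using h⟩
  have e2 : ∑ j ∈ B, cu j ≤ ∑ j ∈ B, degV M j := sum_le_sum hc2
  omega

theorem sum_le_psum {n : ℕ} (r : Fin n → ℕ) (hr : Antitone r) (A : Finset (Fin n)) :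
    ∑ i ∈ A, r i ≤ psum r A.card := by
  have hk : A.card ≤ n := by simpa using card_le_univ A
  have h1 : ∑ i ∈ A, r i = ∑ t : Fin A.card, r (A.orderEmbOfFin rfl t) := by
    conv_lhs => rw [← A.map_orderEmbOfFin_univ rfl]
    rw [sum_map]
    rfl
  have h2 : psum r A.card = ∑ t : Fin A.card, r (Fin.castLE hk t) := by
    unfold psum
    symm
    apply sum_bij (fun t _ => Fin.castLE hk t)
    · intro t _; simp
    · intro a _ b _ h; exact Fin.castLE_injective hk h
    · intro b hb
      rw [mem_filter] at hb
      exact ⟨⟨b, hb.2⟩, mem_univ _, by ext; rfl⟩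
    · intro a _; rfl
  rw [h1, h2]
  apply sum_le_sum
  intro t _
  apply hr
  have key : ∀ (s : ℕ) (hs : s < A.card), s ≤ (A.orderEmbOfFin rfl ⟨s, hs⟩ : ℕ) := by
    intro s
    induction s with
    | zero => intro _; exact Nat.zero_le _
    | succ s ih =>
      intro hs
      have a := ih (by omega)
      have b : A.orderEmbOfFin rfl ⟨s, by omega⟩ < A.orderEmbOfFin rfl ⟨s + 1, hs⟩ :=
        (A.orderEmbOfFin rfl).strictMono (by simp [Fin.lt_def])
      rw [Fin.lt_def] at b
      omega
  exact key t.1 t.2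

theorem psum_conj_le {n m : ℕ} (c : Fin m → ℕ) (k : ℕ) (B : Finset (Fin m)) :
    psum (conjVec n c) k ≤ ∑ j ∈ B, c j + k * Bᶜ.card := by
  unfold psum conjVec conj
  simp only [card_filter]
  rw [sum_comm, ← sum_add_sum_compl B, mul_comm k, ← smul_eq_mul Bᶜ.card, ← sum_const]
  simp only [← card_filter, filter_filter]
  apply add_le_add <;> apply sum_le_sum <;> intro j _
  · calc _ ≤ (range (c j)).card := by
          apply card_le_card_of_injOn (fun i : Fin n => (i : ℕ))
          · intro i hi
            simp at hi ⊢
            omega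
          · intro a _ b _ h; exact Fin.ext h
      _ = c j := card_range _
  · calc _ ≤ (range k).card := by
          apply card_le_card_of_injOn (fun i : Fin n => (i : ℕ))
          · intro i hi
            simp at hi ⊢
            omega
          · intro a _ b _ h; exact Fin.ext h
      _ = k := card_range _

theorem cut_of_dom {n m : ℕ} (rl : Fin n → ℕ) (cu : Fin m → ℕ) (hrl : Antitone rl)
    (hdom : ∀ k, 1 ≤ k → k ≤ n → psum rl k ≤ psum (conjVec n cu) k)
    (A : Finset (Fin n)) (B : Finset (Fin m)) :
    ∑ i ∈ A, rl i ≤ ∑ j ∈ B, cu j + A.card * Bᶜ.card := by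
  rcases A.eq_empty_or_nonempty with rfl | hA
  · simp
  · exact (sum_le_psum rl hrl A).trans ((hdom _ hA.card_pos (by simpa using card_le_univ A)).trans
      (psum_conj_le cu _ B))

theorem exists_good {n m : ℕ} (rl ru : Fin n → ℕ) (cl cu : Fin m → ℕ) (hr : rl ≤ ru)
    (hc : cl ≤ cu)
    (h1 : ∀ (A : Finset (Fin n)) (B : Finset (Fin m)),
      ∑ i ∈ A, rl i ≤ ∑ j ∈ B, cu j + A.card * Bᶜ.card)
    (h2 : ∀ (A : Finset (Fin m)) (B : Finset (Fin n)),
      ∑ i ∈ A, cl i ≤ ∑ j ∈ B, ru j + A.card * Bᶜ.card) (N : ℕ) :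
    ∀ M : Fin n → Fin m → Bool, (∀ i, degU M i ≤ ru i) → (∀ j, degV M j ≤ cu j) →
      defi rl cl M = N →
      ∃ M' : Fin n → Fin m → Bool, (∀ i, degU M' i ≤ ru i) ∧ (∀ j, degV M' j ≤ cu j) ∧
        (∀ i, rl i ≤ degU M' i) ∧ (∀ j, cl j ≤ degV M' j) := by
  induction N using Nat.strong_induction_on with
  | _ N ih =>
    intro M hU hV hN
    by_cases hx : ∃ x, degU M x < rl x
    · obtain ⟨x, hx⟩ := hx
      obtain ⟨M', a, b, c⟩ := improve rl ru cl cu hr h1 M hU hV x hx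
      exact ih _ (hN ▸ c) M' a b rfl
    by_cases hy : ∃ y, degV M y < cl y
    · obtain ⟨y, hy⟩ := hy
      obtain ⟨M', a, b, c⟩ := improve cl cu rl ru hc h2 (fun j i => M i j) hV hU y hy
      refine ih _ ?_ (fun i j => M' j i) b a rfl
      rw [← hN]
      unfold defi at c ⊢
      rw [add_comm, add_comm (∑ i, (rl i - degU M i))]
      exact c
    push Not at hx hy
    exact ⟨M, hU, hV, hx, hy⟩

/-- Main realization theorem (existence form). -/
theorem main_realization {n₁ n₂ : ℕ} (rl ru : Fin n₁ → ℕ) (cl cu : Fin n₂ → ℕ)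
    (hrl : Antitone rl) (hcl : Antitone cl) (hr : rl ≤ ru) (hc : cl ≤ cu)
    (hdom₁ : ∀ k, 1 ≤ k → k ≤ n₁ → psum rl k ≤ psum (conjVec n₁ cu) k)
    (hdom₂ : ∀ k, 1 ≤ k → k ≤ n₂ → psum cl k ≤ psum (conjVec n₂ ru) k) :
    ∃ (r : Fin n₁ → ℕ) (c : Fin n₂ → ℕ),
      rl ≤ r ∧ r ≤ ru ∧ cl ≤ c ∧ c ≤ cu ∧ BiGraphical r c := by
  obtain ⟨M, a, b, c, d⟩ := exists_good rl ru cl cu hr hc (cut_of_dom rl cu hrl hdom₁)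
    (cut_of_dom cl ru hcl hdom₂) _ (fun _ _ => false) (by simp [degU]) (by simp [degV]) rfl
  exact ⟨degU M, degV M, c, a, d, b, M, fun _ => rfl, fun _ => rfl⟩
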